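/- Let 0 ≤ α < 1/4 and α < α₀ < 1/2. Then there exists a constant C > 0, depending only on α and α₀, such that for every positive integer N, every set of α-perturbed nodes x̃_{−N},…,x̃_N, and every continuous 2π-periodic function f: ℝ → ℂ, the interpolant q̃_N ∈ T_N with q̃_N(x̃_j) = f(x̃_j) for all −N ≤ j ≤ N satisfies ‖f − q̃_N‖_{L^∞[−π,π)} ≤ C N^{2α₀} · min_{q ∈ T_N} ‖f − q‖_{L^∞[−π,π)}. -/

import Mathlib

open Real Finset

/-- `q` is a trigonometric polynomial of degree ≤ N. -/
def IsTrigPoly (N : ℕ) (q : ℝ → ℂ) : Prop :=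
  ∃ c : ℤ → ℂ, ∀ x : ℝ,
    q x = ∑ k ∈ Finset.Icc (-(N:ℤ)) (N:ℤ), c k * Complex.exp (Complex.I * (k : ℂ) * (x : ℂ))

/-- `x` is a set of α-perturbed nodes of size 2N+1. -/
def PerturbedNodes (N : ℕ) (α : ℝ) (x : ℤ → ℝ) : Prop :=
  ∀ j ∈ Finset.Icc (-(N:ℤ)) (N:ℤ),
    |x j - (j : ℝ) * (2*π/(2*N+1))| ≤ α * (2*π/(2*N+1))

/-- The supremum of `‖g‖` over `[−π, π)`. -/
noncomputable def supIco (g : ℝ → ℂ) : ℝ :=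
  ⨆ x : Set.Ico (-π) π, ‖g x‖

/-!
Multiplying a trigonometric polynomial by `z ^ N` turns the question into a bound for the Lebesgue
function of `n = 2N + 1` nodes on the unit circle, with nodal polynomial `P`. Up to phases, the
residue of `(w ^ n + 1) / P` at the node of angle `x j` is twice the nodal weight times
`cos (n * x j / 2)`. For perturbed nodes these cosines are at least `cos (π α)` in absolute value,
and their signs cancel those of the weights. Hence the sum of the Poisson kernels at `w`, weighted
by the absolute nodal weights, is at most `2 / (cos (π α) |P w|)`.

The Lebesgue function at `z` is about `|P (r₀ z)|`, with `r₀ = 1 - 1 / (2n)`, times a weighted sum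
of inverse distances from `r₀ z` to the nodes. Each inverse distance is dominated, up to a constant,
by a Poisson kernel at one of the `O(log N)` radii `1 - 2 ^ i / (2n)`, so it remains to bound the
growth `|P (r₀ z)| / |P (r z)|` for `r ≤ r₀`. For equispaced nodes `P w = w ^ n - 1` and this ratio
is bounded. Moving a node at angular distance `θ` by at most `2πα / n` costs at most the factor
`exp (2πα / (n |θ|))`, and for the nearest node a bounded factor; the product over all nodes is
`O(exp (2α log N)) = O(N ^ (2α))`.
-/

section UnitSphere

variable {E : Type*} [NormedAddCommGroup E] [InnerProductSpace ℝ E] {z v a b : E} {r r₀ : ℝ}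

lemma norm_smul_sub_sq (hz : ‖z‖ = 1) (hv : ‖v‖ = 1) (r : ℝ) :
    ‖r • z - v‖ ^ 2 = (1 - r) ^ 2 + r * ‖z - v‖ ^ 2 := by
  rw [norm_sub_sq_real, norm_sub_sq_real, inner_smul_left, norm_smul, mul_pow, hz, hv,
    Real.norm_eq_abs, sq_abs, conj_trivial]
  ring

lemma one_sub_le_norm_smul_sub (hz : ‖z‖ = 1) (hv : ‖v‖ = 1) (hr : 0 ≤ r) :
    1 - r ≤ ‖r • z - v‖ := by
  have h := norm_sub_norm_le v (r • z)
  rwa [norm_smul, hz, hv, mul_one, Real.norm_of_nonneg hr, norm_sub_rev] at h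

lemma norm_smul_sub_pos (hz : ‖z‖ = 1) (hv : ‖v‖ = 1) (hr : 0 ≤ r) (hr₁ : r < 1) :
    0 < ‖r • z - v‖ :=
  (sub_pos.2 hr₁).trans_le (one_sub_le_norm_smul_sub hz hv hr)

lemma sqrt_mul_norm_sub_le (hz : ‖z‖ = 1) (hv : ‖v‖ = 1) (hr : 0 ≤ r) :
    √r * ‖z - v‖ ≤ ‖r • z - v‖ := by
  refine le_of_sq_le_sq ?_ (norm_nonneg _)
  rw [mul_pow, Real.sq_sqrt hr, norm_smul_sub_sq hz hv]
  linarith [sq_nonneg (1 - r)]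

lemma mul_norm_sub_le (hz : ‖z‖ = 1) (hv : ‖v‖ = 1) (hr : 0 ≤ r) (hr₁ : r ≤ 1) :
    r * ‖z - v‖ ≤ ‖r • z - v‖ := by
  refine le_trans ?_ (sqrt_mul_norm_sub_le hz hv hr)
  gcongr
  exact Real.le_sqrt_of_sq_le (by nlinarith)

lemma norm_smul_sub_le_norm_smul_sub (hz : ‖z‖ = 1) (ha : ‖a‖ = 1) (hb : ‖b‖ = 1) (hr : 0 ≤ r)
    (hab : ‖z - a‖ ≤ ‖z - b‖) : ‖r • z - a‖ ≤ ‖r • z - b‖ := by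
  refine le_of_sq_le_sq ?_ (norm_nonneg _)
  rw [norm_smul_sub_sq hz ha, norm_smul_sub_sq hz hb]
  gcongr

lemma norm_smul_sub_le_add_sqrt_mul (hz : ‖z‖ = 1) (ha : ‖a‖ = 1) (hb : ‖b‖ = 1) (hr : 0 ≤ r)
    {t : ℝ} (ht : 0 ≤ t) (h : ‖z - b‖ ≤ ‖z - a‖ + t) :
    ‖r • z - b‖ ≤ ‖r • z - a‖ + √r * t := by
  refine le_of_sq_le_sq ?_ (by positivity)
  have hcross : √r * ‖z - a‖ * (√r * t) ≤ ‖r • z - a‖ * (√r * t) := by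
    gcongr
    exact sqrt_mul_norm_sub_le hz ha hr
  calc ‖r • z - b‖ ^ 2 = (1 - r) ^ 2 + r * ‖z - b‖ ^ 2 := norm_smul_sub_sq hz hb r
    _ ≤ (1 - r) ^ 2 + r * (‖z - a‖ + t) ^ 2 := by gcongr
    _ = ‖r • z - a‖ ^ 2 + 2 * (√r * ‖z - a‖ * (√r * t)) + (√r * t) ^ 2 := by
      rw [norm_smul_sub_sq hz ha]
      linear_combination -(2 * ‖z - a‖ * t + t ^ 2) * Real.sq_sqrt hr
    _ ≤ (‖r • z - a‖ + √r * t) ^ 2 := by linarith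

lemma norm_smul_sub_mul_le_of_norm_sub_le (hz : ‖z‖ = 1) (ha : ‖a‖ = 1) (hb : ‖b‖ = 1)
    (hr : 0 ≤ r) (hrr₀ : r ≤ r₀) (hr₀ : r₀ ≤ 1) (hba : ‖z - b‖ ≤ ‖z - a‖) :
    ‖r₀ • z - b‖ * ‖r • z - a‖ ≤ ‖r₀ • z - a‖ * ‖r • z - b‖ := by
  refine le_of_sq_le_sq ?_ (by positivity)
  simp only [mul_pow, norm_smul_sub_sq hz ha, norm_smul_sub_sq hz hb]
  have hsq : (1 - r₀) ^ 2 * r ≤ (1 - r) ^ 2 * r₀ := by gcongr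
  have hba_sq : ‖z - b‖ ^ 2 ≤ ‖z - a‖ ^ 2 := by gcongr
  linarith [mul_le_mul_of_nonneg_right hsq (sub_nonneg.2 hba_sq)]

end UnitSphere

section DyadicRadii

lemma exists_two_pow_mul_le_lt {τ q : ℝ} {M : ℕ} (hτ : 0 < τ) (hτq : τ ≤ q)
    (hq : q < 8 * (2 ^ M * τ)) : ∃ i ≤ M, 2 ^ i * τ ≤ q ∧ q < 8 * (2 ^ i * τ) := by
  obtain ⟨k, hk, hk'⟩ := exists_nat_pow_near ((one_le_div hτ).2 hτq) one_lt_two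
  rw [le_div_iff₀ hτ] at hk
  rw [div_lt_iff₀ hτ, pow_succ] at hk'
  rcases le_total k M with hkM | hMk
  · exact ⟨k, hkM, hk, by nlinarith [show 0 < 2 ^ k * τ by positivity]⟩
  · refine ⟨M, le_rfl, le_trans ?_ hk, hq⟩
    gcongr
    exact one_le_two

lemma div_le_poissonKernel {z v : ℂ} (hz : ‖z‖ = 1) (hv : ‖v‖ = 1) {τ : ℝ} (hτ : 0 < τ)
    (hτ₁ : τ ≤ 1) :
    τ / (τ ^ 2 + ‖z - v‖ ^ 2) ≤ poissonKernel 0 ((1 - τ) • z) v := by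
  have hnorm : ‖(1 - τ) • z‖ = 1 - τ := by
    rw [norm_smul, hz, mul_one, Real.norm_of_nonneg (by linarith)]
  have hpos := norm_smul_sub_pos hz hv (sub_nonneg.2 hτ₁) (by linarith)
  have hnum : τ ≤ 1 ^ 2 - (1 - τ) ^ 2 := by nlinarith
  have hden : ‖(1 - τ) • z - v‖ ^ 2 ≤ τ ^ 2 + ‖z - v‖ ^ 2 := by
    rw [norm_smul_sub_sq hz hv]
    nlinarith [sq_nonneg ‖z - v‖]
  rw [poissonKernel_def, sub_zero, sub_zero, hv, hnorm, norm_sub_rev v]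
  exact div_le_div₀ (hτ.le.trans hnum) hnum (by positivity) hden

lemma max_div_two_le_norm_smul_sub {z v : ℂ} (hz : ‖z‖ = 1) (hv : ‖v‖ = 1) {τ : ℝ} (hτ : 0 ≤ τ)
    (hτ₂ : τ ≤ 1 / 2) : max τ ‖z - v‖ / 2 ≤ ‖(1 - τ) • z - v‖ := by
  have hnear := one_sub_le_norm_smul_sub hz hv (r := 1 - τ) (by linarith)
  have hfar := mul_norm_sub_le hz hv (r := 1 - τ) (by linarith) (by linarith)
  rw [div_le_iff₀ two_pos]
  exact max_le (by linarith) (by nlinarith [norm_nonneg (z - v)])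

/-- The radii `1 - 2 ^ i / (2 * n)`, which step away from the unit circle dyadically from the scale
`1 / (2 * n)`, comparable with the mesh width of `n` nodes, up to a constant. -/
noncomputable def dyadicRadius (n i : ℕ) : ℝ := 1 - 2 ^ i / (2 * n)

variable {n i : ℕ}

lemma dyadicRadius_zero (n : ℕ) : dyadicRadius n 0 = 1 - 1 / (2 * n) := by
  rw [dyadicRadius, pow_zero]

lemma half_le_dyadicRadius (hn : 0 < n) (hi : i ≤ Nat.log 2 n) : 1 / 2 ≤ dyadicRadius n i := by
  have hpow : (2 : ℝ) ^ i ≤ n := by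
    exact_mod_cast (Nat.pow_le_pow_right two_pos hi).trans (Nat.pow_log_le_self 2 hn.ne')
  have hle : (2 : ℝ) ^ i / (2 * n) ≤ 1 / 2 := by
    rw [div_le_div_iff₀ (by positivity) two_pos]
    linarith
  unfold dyadicRadius
  linarith

lemma dyadicRadius_lt_one (hn : 0 < n) (i : ℕ) : dyadicRadius n i < 1 :=
  sub_lt_self _ (by positivity)

lemma dyadicRadius_le_zero (n i : ℕ) : dyadicRadius n i ≤ dyadicRadius n 0 := by
  unfold dyadicRadius
  gcongr
  exacts [one_le_two, i.zero_le]

lemma exists_inv_norm_smul_sub_le_poissonKernel {z v : ℂ} (hz : ‖z‖ = 1) (hv : ‖v‖ = 1)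
    (hn : 0 < n) :
    ∃ i ≤ Nat.log 2 n, ‖dyadicRadius n 0 • z - v‖⁻¹
      ≤ 32 * poissonKernel 0 (dyadicRadius n i • z) v := by
  set τ : ℝ := 1 / (2 * n) with hτ_def
  set q : ℝ := max τ ‖z - v‖
  have hτ : 0 < τ := by positivity
  have hq₀ : 0 < q := hτ.trans_le (le_max_left _ _)
  have hradius : ∀ i, dyadicRadius n i = 1 - 2 ^ i * τ := fun i => by
    rw [dyadicRadius, hτ_def, mul_one_div]
  have hn_lt : (n : ℝ) < 2 ^ Nat.log 2 n * 2 := by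
    exact_mod_cast Nat.lt_pow_succ_log_self one_lt_two n
  have hq : q < 8 * (2 ^ Nat.log 2 n * τ) := by
    have hlast : 1 < 4 * (2 ^ Nat.log 2 n * τ) := by
      rw [hτ_def, mul_one_div, ← mul_div_assoc, one_lt_div (by positivity)]
      linarith
    have hone : (1 : ℝ) ≤ 2 ^ Nat.log 2 n := one_le_pow₀ one_le_two
    refine max_lt (by nlinarith) ?_
    linarith [norm_sub_le z v]
  obtain ⟨i, hi, hiq, hqi⟩ := exists_two_pow_mul_le_lt hτ (le_max_left _ _) hq
  have hradius_i := half_le_dyadicRadius hn hi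
  have hradius₀ := half_le_dyadicRadius hn (Nat.zero_le _)
  have hdist : q / 2 ≤ ‖dyadicRadius n 0 • z - v‖ := by
    rw [dyadicRadius_zero] at hradius₀ ⊢
    exact max_div_two_le_norm_smul_sub hz hv hτ.le (by linarith)
  refine ⟨i, hi, ?_⟩
  calc ‖dyadicRadius n 0 • z - v‖⁻¹ ≤ (q / 2)⁻¹ := by gcongr
    _ ≤ 32 * (2 ^ i * τ / (q ^ 2 + q ^ 2)) := by
      rw [inv_div, ← mul_div_assoc, div_le_div_iff₀ hq₀ (by positivity)]
      nlinarith
    _ ≤ 32 * (2 ^ i * τ / ((2 ^ i * τ) ^ 2 + ‖z - v‖ ^ 2)) := by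
      gcongr
      exact le_max_right _ _
    _ ≤ 32 * poissonKernel 0 (dyadicRadius n i • z) v := by
      rw [hradius] at hradius_i ⊢
      gcongr
      exact div_le_poissonKernel hz hv (by positivity) (by linarith)

end DyadicRadii

section LebesgueFunction

open Polynomial

variable {ι 𝕜 : Type*} [NormedField 𝕜] {s : Finset ι} {v : ι → 𝕜}

lemma norm_eval_nodal (s : Finset ι) (v : ι → 𝕜) (z : 𝕜) :
    ‖(Lagrange.nodal s v).eval z‖ = ∏ i ∈ s, ‖z - v i‖ := by
  rw [Lagrange.eval_nodal, norm_prod]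

variable [DecidableEq ι]

/-- The Lebesgue function of polynomial interpolation at the nodes `v i`, `i ∈ s`: at `z` it is the
sum of the absolute values of the Lagrange basis polynomials. -/
noncomputable def lebesgueFunction (s : Finset ι) (v : ι → 𝕜) (z : 𝕜) : ℝ :=
  ∑ i ∈ s, ‖(Lagrange.basis s v i).eval z‖

lemma norm_eval_le_mul_lebesgueFunction (hv : Set.InjOn v s) {p : 𝕜[X]} (hp : p.degree < #s)
    {M : ℝ} (hM : ∀ i ∈ s, ‖p.eval (v i)‖ ≤ M) (z : 𝕜) :
    ‖p.eval z‖ ≤ M * lebesgueFunction s v z := by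
  rw [Lagrange.eq_interpolate hv hp, Lagrange.interpolate_apply, eval_finsetSum, lebesgueFunction,
    mul_sum]
  refine norm_sum_le_of_le _ fun i hi => ?_
  rw [eval_mul, eval_C, norm_mul]
  gcongr
  exact hM i hi

lemma norm_eval_basis {i : ι} (hi : i ∈ s) (z : 𝕜) :
    ‖(Lagrange.basis s v i).eval z‖
      = ‖Lagrange.nodalWeight s v i‖ * ∏ k ∈ s.erase i, ‖z - v k‖ := by
  rw [Lagrange.basis_eq_prod_sub_inv_mul_nodal_div hi, ← Lagrange.nodal_erase_eq_nodal_div hi,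
    eval_mul, eval_C, norm_mul, norm_eval_nodal]

end LebesgueFunction

section UnitCircleNodes

open Polynomial

variable {ι : Type*} {s : Finset ι} {v : ι → ℂ} {z : ℂ}

lemma half_le_dyadicRadius_zero_pow {n : ℕ} (hn : 0 < n) :
    1 / 2 ≤ dyadicRadius n 0 ^ (n - 1) := by
  have hbernoulli := one_add_mul_le_pow (a := -(1 / (2 * (n : ℝ)))) (by
    linarith [half_le_dyadicRadius hn (Nat.zero_le _), dyadicRadius_zero n]) (n - 1)
  rw [← sub_eq_add_neg, ← dyadicRadius_zero, Nat.cast_pred hn] at hbernoulli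
  refine le_trans ?_ hbernoulli
  have : (0 : ℝ) < n := by exact_mod_cast hn
  have hstep : ((n : ℝ) - 1) * (1 / (2 * n)) ≤ 1 / 2 := by
    rw [mul_one_div, div_le_div_iff₀ (by positivity) two_pos]
    linarith
  linarith

variable [DecidableEq ι]

lemma norm_eval_basis_le_norm_eval_nodal_div (hv : ∀ i ∈ s, ‖v i‖ = 1) (hz : ‖z‖ = 1) {j : ι}
    (hj : j ∈ s) :
    ‖(Lagrange.basis s v j).eval z‖ ≤ 2 * ‖Lagrange.nodalWeight s v j‖ *
      (‖(Lagrange.nodal s v).eval (dyadicRadius #s 0 • z)‖ * ‖dyadicRadius #s 0 • z - v j‖⁻¹) := by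
  have hs : 0 < #s := card_pos.2 ⟨j, hj⟩
  set r := dyadicRadius #s 0
  have hr : 0 ≤ r := by linarith [half_le_dyadicRadius hs (Nat.zero_le _)]
  have hr₁ : r < 1 := dyadicRadius_lt_one hs 0
  have hradial : r ^ (#s - 1) * ∏ k ∈ s.erase j, ‖z - v k‖
      ≤ ∏ k ∈ s.erase j, ‖r • z - v k‖ := by
    rw [← card_erase_of_mem hj, ← prod_const, ← prod_mul_distrib]
    exact prod_le_prod (fun _ _ => by positivity) fun k hk =>
      mul_norm_sub_le hz (hv k (mem_of_mem_erase hk)) hr hr₁.le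
  have hprod : ∏ k ∈ s.erase j, ‖z - v k‖ ≤ 2 * ∏ k ∈ s.erase j, ‖r • z - v k‖ := by
    nlinarith [half_le_dyadicRadius_zero_pow hs,
      prod_nonneg fun k (_ : k ∈ s.erase j) => norm_nonneg (z - v k)]
  have herase : ∏ k ∈ s.erase j, ‖r • z - v k‖
      = ‖(Lagrange.nodal s v).eval (r • z)‖ * ‖r • z - v j‖⁻¹ := by
    rw [norm_eval_nodal, ← mul_prod_erase s _ hj, mul_comm ‖r • z - v j‖,
      mul_inv_cancel_right₀ (norm_smul_sub_pos hz (hv j hj) hr hr₁).ne']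
  rw [norm_eval_basis hj, ← herase, mul_comm 2, mul_assoc]
  gcongr

lemma poissonKernel_nonneg {w v : ℂ} (h : ‖w‖ ≤ ‖v‖) : 0 ≤ poissonKernel 0 w v := by
  rw [poissonKernel_def, sub_zero, sub_zero]
  exact div_nonneg (sub_nonneg.2 (by gcongr)) (sq_nonneg _)

lemma lebesgueFunction_le_sum_poissonKernel (hv : ∀ i ∈ s, ‖v i‖ = 1) (hz : ‖z‖ = 1) :
    lebesgueFunction s v z
      ≤ 64 * ∑ i ∈ range (Nat.log 2 #s + 1),
          ‖(Lagrange.nodal s v).eval (dyadicRadius #s 0 • z)‖ *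
          ∑ j ∈ s, ‖Lagrange.nodalWeight s v j‖ *
            poissonKernel 0 (dyadicRadius #s i • z) (v j) := by
  simp only [mul_sum]
  rw [sum_comm, lebesgueFunction]
  refine sum_le_sum fun j hj => ?_
  have hs : 0 < #s := card_pos.2 ⟨j, hj⟩
  obtain ⟨i, hi, hle⟩ := exists_inv_norm_smul_sub_le_poissonKernel hz (hv j hj) hs
  have hpoisson : ∀ k ∈ range (Nat.log 2 #s + 1),
      0 ≤ poissonKernel 0 (dyadicRadius #s k • z) (v j) := fun k hk => by
    have hk' := half_le_dyadicRadius hs (Nat.lt_succ_iff.1 (mem_range.1 hk))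
    refine poissonKernel_nonneg ?_
    rw [norm_smul, hz, mul_one, hv j hj, Real.norm_of_nonneg (by linarith)]
    exact (dyadicRadius_lt_one hs k).le
  set B := ‖(Lagrange.nodal s v).eval (dyadicRadius #s 0 • z)‖
  calc ‖(Lagrange.basis s v j).eval z‖
      ≤ 2 * ‖Lagrange.nodalWeight s v j‖ * (B * ‖dyadicRadius #s 0 • z - v j‖⁻¹) :=
        norm_eval_basis_le_norm_eval_nodal_div hv hz hj
    _ ≤ 2 * ‖Lagrange.nodalWeight s v j‖ *
        (B * (32 * poissonKernel 0 (dyadicRadius #s i • z) (v j))) := by gcongr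
    _ = 64 * (B * (‖Lagrange.nodalWeight s v j‖ *
        poissonKernel 0 (dyadicRadius #s i • z) (v j))) := by ring
    _ ≤ ∑ k ∈ range (Nat.log 2 #s + 1), 64 * (B * (‖Lagrange.nodalWeight s v j‖ *
        poissonKernel 0 (dyadicRadius #s k • z) (v j))) :=
        single_le_sum (f := fun k => 64 * (B * (‖Lagrange.nodalWeight s v j‖ *
          poissonKernel 0 (dyadicRadius #s k • z) (v j))))
          (fun k hk => by have := hpoisson k hk; positivity)
          (mem_range.2 (Nat.lt_succ_iff.2 hi))

end UnitCircleNodes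

section PartialFractions

open Polynomial

variable {ι : Type*} [DecidableEq ι] {s : Finset ι} {v : ι → ℂ} {w : ℂ}

lemma pow_card_add_one_div_eval_nodal {𝕜 : Type*} [Field 𝕜] {v : ι → 𝕜} {w : 𝕜}
    (hv : Set.InjOn v s) (hs : s.Nonempty) (hw : ∀ i ∈ s, w ≠ v i) :
    (w ^ #s + 1) / (Lagrange.nodal s v).eval w
      = 1 + ∑ i ∈ s, Lagrange.nodalWeight s v i * (w - v i)⁻¹ * (v i ^ #s + 1) := by
  have hcard : #s ≠ 0 := card_ne_zero.2 hs
  have hdeg : (X ^ #s + C (1 : 𝕜)).degree = ((#s : ℕ) : WithBot ℕ) :=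
    degree_X_pow_add_C (Nat.pos_of_ne_zero hcard) _
  have hmonic : (X ^ #s + C (1 : 𝕜)).Monic := monic_X_pow_add_C _ hcard
  have hdeg_sub : (X ^ #s + C (1 : 𝕜) - Lagrange.nodal s v).degree < ((#s : ℕ) : WithBot ℕ) := by
    rw [← hdeg]
    refine degree_sub_lt_left (by rw [hdeg, Lagrange.degree_nodal]) hmonic.ne_zero ?_
    rw [Lagrange.nodal_monic, hmonic.leadingCoeff]
  have heval := congrArg (eval w) <|
    Lagrange.eq_interpolate_of_eval_eq (fun i => v i ^ #s + 1) hv hdeg_sub fun i hi => by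
      simp [Lagrange.eval_nodal_at_node hi]
  rw [Lagrange.eval_interpolate_not_at_node _ hw, eval_sub, eval_add, eval_pow, eval_X, eval_C]
    at heval
  rw [div_eq_iff (Lagrange.eval_nodal_not_at_node hw)]
  linear_combination heval

lemma poissonKernel_zero_eq_re {z : ℂ} (hwz : w ≠ z) :
    poissonKernel 0 w z = -(1 + 2 * (z / (w - z)).re) := by
  have hherglotz : herglotzRieszKernel 0 w z = -(1 + 2 * (z / (w - z))) := by
    have := sub_ne_zero.2 hwz
    have := sub_ne_zero.2 hwz.symm
    rw [herglotzRieszKernel_def, sub_zero, sub_zero]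
    field_simp
    ring
  rw [poissonKernel_eq_re_herglotzRieszKernel, Function.comp_apply, hherglotz]
  simp

lemma ne_of_norm_lt_one {v : ℂ} (hw : ‖w‖ < 1) (hv : ‖v‖ = 1) : w ≠ v := by
  rintro rfl
  exact hw.ne hv

section RealResidues

variable {c : ℂ} {ρ : ι → ℝ}

lemma conj_mul_pow_card_add_one_div_eval_nodal (hv : Set.InjOn v s) (hs : s.Nonempty)
    (hnorm : ∀ i ∈ s, ‖v i‖ = 1) (hc : ‖c‖ = 1)
    (hρ : ∀ i ∈ s, Lagrange.nodalWeight s v i * (v i ^ #s + 1) = c * ρ i * v i) (hw : ‖w‖ < 1) :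
    (starRingEnd ℂ) c * ((w ^ #s + 1) / (Lagrange.nodal s v).eval w)
      = (starRingEnd ℂ) c + ∑ i ∈ s, (ρ i : ℂ) * (v i / (w - v i)) := by
  have hcc : (starRingEnd ℂ) c * c = 1 := by
    rw [mul_comm, Complex.mul_conj, Complex.normSq_eq_norm_sq, hc, one_pow, Complex.ofReal_one]
  rw [pow_card_add_one_div_eval_nodal hv hs fun i hi => ne_of_norm_lt_one hw (hnorm i hi),
    mul_add, mul_one, mul_sum]
  congr 1
  refine sum_congr rfl fun i hi => ?_
  linear_combination (starRingEnd ℂ) c * (w - v i)⁻¹ * hρ i hi + ρ i * v i * (w - v i)⁻¹ * hcc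

lemma sum_residue_eq_two_mul_re (hv : Set.InjOn v s) (hs : s.Nonempty)
    (hnorm : ∀ i ∈ s, ‖v i‖ = 1) (hc : ‖c‖ = 1)
    (hρ : ∀ i ∈ s, Lagrange.nodalWeight s v i * (v i ^ #s + 1) = c * ρ i * v i)
    (hnodal : (Lagrange.nodal s v).eval 0 * c ^ 2 = -1) : ∑ i ∈ s, ρ i = 2 * c.re := by
  have hat_zero := conj_mul_pow_card_add_one_div_eval_nodal hv hs hnorm hc hρ (w := 0) (by simp)
  have hterm : ∀ i ∈ s, (ρ i : ℂ) * (v i / (0 - v i)) = -ρ i := fun i hi => by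
    rw [zero_sub, div_neg, div_self (ne_of_norm_lt_one (by simp) (hnorm i hi)).symm, mul_neg,
      mul_one]
  have hinv : ((Lagrange.nodal s v).eval 0)⁻¹ = -c ^ 2 :=
    inv_eq_of_mul_eq_one_right (by linear_combination -hnodal)
  have hcc : (starRingEnd ℂ) c * c = 1 := by
    rw [mul_comm, Complex.mul_conj, Complex.normSq_eq_norm_sq, hc, one_pow, Complex.ofReal_one]
  rw [zero_pow (card_ne_zero.2 hs), zero_add, one_div, hinv, sum_congr rfl hterm,
    sum_neg_distrib] at hat_zero
  have hcomplex : (∑ i ∈ s, ρ i : ℂ) = (starRingEnd ℂ) c + c := by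
    linear_combination hat_zero + c * hcc
  rw [add_comm, Complex.add_conj] at hcomplex
  exact_mod_cast hcomplex

/- Up to the unimodular factor `c`, the partial fraction expansion of `(w ^ #s + 1) / nodal` is a
real combination of Herglotz kernels: its value at `w = 0` determines the sum of the residues `ρ`,
and its real part at `w` is then a combination of Poisson kernels. -/
lemma abs_sum_mul_poissonKernel_le (hv : Set.InjOn v s) (hs : s.Nonempty)
    (hnorm : ∀ i ∈ s, ‖v i‖ = 1) (hc : ‖c‖ = 1)
    (hρ : ∀ i ∈ s, Lagrange.nodalWeight s v i * (v i ^ #s + 1) = c * ρ i * v i)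
    (hnodal : (Lagrange.nodal s v).eval 0 * c ^ 2 = -1) (hw : ‖w‖ < 1) :
    |∑ i ∈ s, ρ i * poissonKernel 0 w (v i)|
      ≤ 2 * ‖(w ^ #s + 1) / (Lagrange.nodal s v).eval w‖ := by
  have hre : ∑ i ∈ s, ρ i * poissonKernel 0 w (v i)
      = -2 * ((starRingEnd ℂ) c * ((w ^ #s + 1) / (Lagrange.nodal s v).eval w)).re := by
    have hsum : -2 * c.re = ∑ i ∈ s, -ρ i := by
      rw [sum_neg_distrib, sum_residue_eq_two_mul_re hv hs hnorm hc hρ hnodal, neg_mul]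
    rw [conj_mul_pow_card_add_one_div_eval_nodal hv hs hnorm hc hρ hw, Complex.add_re,
      Complex.conj_re, Complex.re_sum, mul_add, mul_sum, hsum, ← sum_add_distrib]
    refine sum_congr rfl fun i hi => ?_
    rw [poissonKernel_zero_eq_re (ne_of_norm_lt_one hw (hnorm i hi)), Complex.re_ofReal_mul]
    ring
  have hle := Complex.abs_re_le_norm
    ((starRingEnd ℂ) c * ((w ^ #s + 1) / (Lagrange.nodal s v).eval w))
  rw [norm_mul, RCLike.norm_conj, hc, one_mul] at hle
  rw [hre, abs_mul, abs_neg, abs_two]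
  gcongr

end RealResidues

end PartialFractions

section CircleNodes

open Polynomial

/-- The points `e ^ (i * x j)` of the unit circle with angles `x j`, as complex numbers. -/
noncomputable def circleNodes {ι : Type*} (x : ι → ℝ) (j : ι) : ℂ := Circle.exp (x j)

lemma norm_circleNodes {ι : Type*} (x : ι → ℝ) (j : ι) : ‖circleNodes x j‖ = 1 :=
  Circle.norm_coe _

lemma coe_circle_exp_sub (a b : ℝ) : (Circle.exp a - Circle.exp b : ℂ)
    = Circle.exp ((a + b) / 2) * (Complex.I * (2 * sin ((a - b) / 2) : ℝ)) := by
  have ha : Circle.exp a = Circle.exp ((a + b) / 2) * Circle.exp ((a - b) / 2) := by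
    rw [← Circle.exp_add]; ring_nf
  have hb : Circle.exp b = Circle.exp ((a + b) / 2) * Circle.exp (-((a - b) / 2)) := by
    rw [← Circle.exp_add]; ring_nf
  rw [ha, hb]
  push_cast [Circle.coe_mul, Circle.coe_exp, Complex.exp_mul_I, Complex.cos_neg, Complex.sin_neg]
  ring

lemma coe_circle_exp_add_one (a : ℝ) :
    (Circle.exp a + 1 : ℂ) = Circle.exp (a / 2) * (2 * cos (a / 2) : ℝ) := by
  have ha : Circle.exp a = Circle.exp (a / 2) * Circle.exp (a / 2) := by
    rw [← Circle.exp_add, add_halves]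
  have hone : (1 : Circle) = Circle.exp (a / 2) * Circle.exp (-(a / 2)) := by
    rw [← Circle.exp_add, add_neg_cancel, Circle.exp_zero]
  rw [ha, ← Circle.coe_one, hone]
  push_cast [Circle.coe_mul, Circle.coe_exp, Complex.exp_mul_I, Complex.cos_neg, Complex.sin_neg]
  ring

lemma norm_coe_circle_exp_sub (a b : ℝ) :
    ‖(Circle.exp a - Circle.exp b : ℂ)‖ = 2 * |sin ((a - b) / 2)| := by
  rw [coe_circle_exp_sub, norm_mul, Circle.norm_coe, one_mul, norm_mul, Complex.norm_I, one_mul,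
    Complex.norm_real, Real.norm_eq_abs, abs_mul, abs_two]

variable {ι : Type*} {s : Finset ι} {x : ι → ℝ}

/-- The unimodular number common to the residues of `(w ^ #s + 1) / nodal` at the nodes of angles
`x j`. -/
noncomputable def circlePhase (s : Finset ι) (x : ι → ℝ) : ℂ :=
  Circle.exp (-(∑ k ∈ s, x k) / 2) * (Complex.I ^ (#s - 1))⁻¹

lemma norm_circlePhase (s : Finset ι) (x : ι → ℝ) : ‖circlePhase s x‖ = 1 := by
  rw [circlePhase, norm_mul, Circle.norm_coe, norm_inv, norm_pow, Complex.norm_I, one_pow, inv_one,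
    one_mul]

lemma coe_circle_exp_sum (s : Finset ι) (x : ι → ℝ) :
    (Circle.exp (∑ k ∈ s, x k) : ℂ) = ∏ k ∈ s, (Circle.exp (x k) : ℂ) := by
  simp only [Circle.coe_exp, Complex.ofReal_sum, sum_mul, Complex.exp_sum]

lemma eval_zero_nodal_circleNodes_mul_sq (hs : s.Nonempty) :
    (Lagrange.nodal s (circleNodes x)).eval 0 * circlePhase s x ^ 2 = -1 := by
  have hpow : (Complex.I ^ (#s - 1)) ^ 2 = (-1) ^ (#s - 1) := by
    rw [← pow_mul, mul_comm, pow_mul, Complex.I_sq]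
  have hsign : (-1 : ℂ) ^ #s = (-1) ^ (#s - 1) * -1 := by
    rw [← pow_succ, Nat.sub_add_cancel (card_pos.2 hs)]
  have hexp : (Circle.exp (∑ k ∈ s, x k) * Circle.exp (-(∑ k ∈ s, x k) / 2) ^ 2 : ℂ) = 1 := by
    rw [← Circle.coe_pow, ← Circle.exp_natCast_mul, ← Circle.coe_mul, ← Circle.exp_add,
      Nat.cast_ofNat, mul_div_cancel₀ _ two_ne_zero, add_neg_cancel, Circle.exp_zero,
      Circle.coe_one]
  have heval : (Lagrange.nodal s (circleNodes x)).eval 0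
      = (-1) ^ #s * Circle.exp (∑ k ∈ s, x k) := by
    simp only [Lagrange.eval_nodal, zero_sub, prod_neg, circleNodes, coe_circle_exp_sum]
  rw [heval, circlePhase, mul_pow, inv_pow, hpow, hsign]
  have : ((-1 : ℂ) ^ (#s - 1)) * ((-1) ^ (#s - 1))⁻¹ = 1 := mul_inv_cancel₀ (by simp)
  linear_combination -((-1 : ℂ) ^ (#s - 1)) * ((-1) ^ (#s - 1))⁻¹ * hexp - this

variable [DecidableEq ι]

/-- The residue of `(w ^ #s + 1) / nodal` at the node `e ^ (i * x j)`, divided by the node and by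
the unimodular number common to all nodes; this quotient is real. -/
noncomputable def circleResidue (s : Finset ι) (x : ι → ℝ) (j : ι) : ℝ :=
  2 * cos (#s * x j / 2) * (∏ k ∈ s.erase j, 2 * sin ((x j - x k) / 2))⁻¹

lemma norm_nodalWeight_circleNodes (s : Finset ι) (x : ι → ℝ) (j : ι) :
    ‖Lagrange.nodalWeight s (circleNodes x) j‖
      = |∏ k ∈ s.erase j, 2 * sin ((x j - x k) / 2)|⁻¹ := by
  simp only [circleNodes, Lagrange.nodalWeight, norm_prod, norm_inv, norm_coe_circle_exp_sub,
    abs_mul, abs_two, abs_prod, prod_inv_distrib]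

lemma nodalWeight_circleNodes_mul {j : ι} (hj : j ∈ s) :
    Lagrange.nodalWeight s (circleNodes x) j * (circleNodes x j ^ #s + 1)
      = circlePhase s x * circleResidue s x j * circleNodes x j := by
  have hangle : ∑ k ∈ s.erase j, (x j + x k) / 2
      = #s * x j / 2 - (-(∑ k ∈ s, x k) / 2 + x j) := by
    rw [← sum_div, sum_add_distrib, sum_const, card_erase_of_mem hj, nsmul_eq_mul,
      Nat.cast_pred (card_pos.2 ⟨j, hj⟩), ← add_sum_erase s x hj]
    ring
  have hprod : ∏ k ∈ s.erase j, (circleNodes x j - circleNodes x k)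
      = Circle.exp (#s * x j / 2) / (Circle.exp (-(∑ k ∈ s, x k) / 2) * Circle.exp (x j))
        * (Complex.I ^ (#s - 1) * (∏ k ∈ s.erase j, 2 * sin ((x j - x k) / 2) : ℝ)) := by
    simp only [circleNodes, coe_circle_exp_sub]
    rw [prod_mul_distrib, prod_mul_distrib, prod_const, card_erase_of_mem hj, Complex.ofReal_prod,
      ← coe_circle_exp_sum, hangle, Circle.exp_sub, Circle.exp_add,
      Circle.coe_div, Circle.coe_mul]
  have hnum : circleNodes x j ^ #s + 1
      = Circle.exp (#s * x j / 2) * (2 * cos (#s * x j / 2) : ℝ) := by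
    rw [← coe_circle_exp_add_one, Circle.exp_natCast_mul, Circle.coe_pow, circleNodes]
  rw [Lagrange.nodalWeight, prod_inv_distrib, hprod, hnum, circlePhase, circleResidue, circleNodes]
  have := Circle.coe_ne_zero (Circle.exp (#s * x j / 2))
  push_cast
  field_simp

lemma abs_sum_circleResidue_mul_poissonKernel_le (hx : Set.InjOn (circleNodes x) s)
    (hs : s.Nonempty) {w : ℂ} (hw : ‖w‖ < 1) :
    |∑ j ∈ s, circleResidue s x j * poissonKernel 0 w (circleNodes x j)|
      ≤ 2 * ‖(w ^ #s + 1) / (Lagrange.nodal s (circleNodes x)).eval w‖ :=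
  abs_sum_mul_poissonKernel_le hx hs (fun j _ => norm_circleNodes x j) (norm_circlePhase s x)
    (fun _ hj => nodalWeight_circleNodes_mul hj) (eval_zero_nodal_circleNodes_mul_sq hs) hw

end CircleNodes

section PerturbedNodes

lemma injOn_circleNodes {ι : Type*} {s : Finset ι} {x : ι → ℝ} (hx : Set.InjOn x s)
    (hmem : ∀ j ∈ s, x j ∈ Set.Ioo (-π) π) : Set.InjOn (circleNodes x) s := fun j hj k hk hjk =>
  hx hj hk <| Circle.exp_injOn_Ico (by linarith) (Set.Ioo_subset_Ico_self (hmem j hj))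
    (Set.Ioo_subset_Ico_self (hmem k hk)) (Circle.ext hjk)

lemma prod_two_mul_sin_half_sub {ι : Type*} [LinearOrder ι] {s : Finset ι} {x : ι → ℝ}
    (hx : StrictMonoOn x s) (hmem : ∀ j ∈ s, x j ∈ Set.Ioo (-π) π) {j : ι} (hj : j ∈ s) :
    ∏ k ∈ s.erase j, 2 * sin ((x j - x k) / 2)
      = (-1) ^ #{k ∈ s | j < k} * |∏ k ∈ s.erase j, 2 * sin ((x j - x k) / 2)| := by
  have hsin_pos : ∀ a ∈ s, ∀ b ∈ s, a < b → 0 < sin ((x b - x a) / 2) := fun a ha b hb hab =>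
    sin_pos_of_pos_of_lt_pi (half_pos (sub_pos.2 (hx ha hb hab))) <| by
      linarith [(hmem a ha).1, (hmem b hb).2]
  have hsign : ∀ k ∈ s.erase j, 2 * sin ((x j - x k) / 2)
      = (if j < k then -1 else 1) * |2 * sin ((x j - x k) / 2)| := by
    intro k hk
    obtain ⟨hkj, hks⟩ := mem_erase.1 hk
    rcases hkj.lt_or_gt with hlt | hgt
    · rw [if_neg hlt.not_gt, one_mul, abs_of_pos (mul_pos two_pos (hsin_pos k hks j hj hlt))]
    · have hneg : sin ((x j - x k) / 2) = -sin ((x k - x j) / 2) := by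
        rw [← sin_neg, ← neg_div, neg_sub]
      rw [if_pos hgt, hneg, mul_neg, abs_neg,
        abs_of_pos (mul_pos two_pos (hsin_pos j hj k hks hgt)), neg_one_mul]
  have hfilter : {k ∈ s.erase j | j < k} = {k ∈ s | j < k} := by
    rw [filter_erase, erase_eq_of_notMem]
    simp
  rw [prod_congr rfl hsign, prod_mul_distrib, prod_ite, prod_const, prod_const_one, mul_one,
    hfilter, abs_mul, abs_neg_one_pow, one_mul, ← abs_prod, abs_abs]

/-- The indices `-N, …, N` of the interpolation nodes. -/
noncomputable abbrev nodeIndices (N : ℕ) : Finset ℤ := Finset.Icc (-(N : ℤ)) N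

lemma card_nodeIndices (N : ℕ) : #(nodeIndices N) = 2 * N + 1 := by
  rw [Int.card_Icc]
  omega

lemma nodeIndices_nonempty (N : ℕ) : (nodeIndices N).Nonempty :=
  card_pos.1 (by rw [card_nodeIndices]; omega)

variable {N : ℕ} {α : ℝ} {x : ℤ → ℝ}

lemma PerturbedNodes.mem_Ioo (hx : PerturbedNodes N α x) (hα : α < 1 / 2) {j : ℤ}
    (hj : j ∈ nodeIndices N) : x j ∈ Set.Ioo (-π) π := by
  have hclose := hx j hj
  have hj_abs : |(j : ℝ)| ≤ N := by
    obtain ⟨hlow, hupp⟩ := mem_Icc.1 hj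
    exact abs_le.2 ⟨by exact_mod_cast hlow, by exact_mod_cast hupp⟩
  set h : ℝ := 2 * π / (2 * N + 1) with hh
  have hpos : 0 < h := by positivity
  have hπ : (N + 1 / 2) * h = π := by
    rw [hh]
    field_simp
  refine abs_lt.1 ?_
  calc |x j| ≤ |x j - j * h| + |j * h| := by simpa using abs_add_le (x j - j * h) (j * h)
    _ ≤ α * h + N * h := by
      rw [abs_mul, abs_of_pos hpos]
      gcongr
    _ < π := by nlinarith

lemma PerturbedNodes.strictMonoOn (hx : PerturbedNodes N α x) (hα : α < 1 / 2) :
    StrictMonoOn x (nodeIndices N) := by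
  intro j hj k hk hjk
  have hxj := (abs_le.1 (hx j hj)).2
  have hxk := (abs_le.1 (hx k hk)).1
  have hjk' : (j : ℝ) + 1 ≤ k := by exact_mod_cast hjk
  have hpos : 0 < 2 * π / (2 * N + 1) := by positivity
  nlinarith

lemma PerturbedNodes.injOn_circleNodes (hx : PerturbedNodes N α x) (hα : α < 1 / 2) :
    Set.InjOn (circleNodes x) (nodeIndices N) :=
  _root_.injOn_circleNodes (hx.strictMonoOn hα).injOn fun _ hj => hx.mem_Ioo hα hj

lemma PerturbedNodes.cos_pi_mul_le (hx : PerturbedNodes N α x) (hα : α ≤ 1) {j : ℤ}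
    (hj : j ∈ nodeIndices N) : cos (π * α) ≤ (-1) ^ j * cos ((2 * N + 1 : ℕ) * x j / 2) := by
  have hclose := hx j hj
  set h : ℝ := 2 * π / (2 * N + 1) with hh
  have hpos : 0 < h := by positivity
  have hangle : (2 * N + 1 : ℕ) * x j / 2 = π * ((x j - j * h) / h) + j * π := by
    rw [hh]
    push_cast
    field_simp
    ring
  have hsq : (-1 : ℝ) ^ j * (-1) ^ j = 1 := by
    rw [← mul_zpow, neg_one_mul, neg_neg, one_zpow]
  rw [hangle, cos_add_int_mul_pi, ← mul_assoc, hsq, one_mul,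
    ← cos_abs (π * ((x j - j * h) / h)), abs_mul,
    abs_of_pos pi_pos, abs_div, abs_of_pos hpos]
  refine cos_le_cos_of_nonneg_of_le_pi (by positivity) (mul_le_of_le_one_right pi_pos.le hα) ?_
  gcongr
  rwa [div_le_iff₀ hpos]

/- The sign of the product of sines alternates with `j`, and so does the cosine: this is what makes
all residues have the same sign. -/
lemma PerturbedNodes.mul_norm_nodalWeight_le (hx : PerturbedNodes N α x) (hα : α < 1 / 2) {j : ℤ}
    (hj : j ∈ nodeIndices N) :
    2 * cos (π * α) * ‖Lagrange.nodalWeight (nodeIndices N) (circleNodes x) j‖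
      ≤ (-1) ^ N * circleResidue (nodeIndices N) x j := by
  have hcard : #{k ∈ nodeIndices N | j < k} = ((N : ℤ) - j).toNat := by
    rw [← Int.card_Ioc]
    congr 1
    ext k
    simp only [mem_Icc, mem_filter, mem_Ioc] at hj ⊢
    omega
  have hsign : (-1 : ℝ) ^ N * ((-1) ^ #{k ∈ nodeIndices N | j < k})⁻¹ = (-1) ^ j := by
    rw [hcard, ← zpow_natCast, ← zpow_natCast, Int.toNat_of_nonneg (sub_nonneg.2 (mem_Icc.1 hj).2),
      ← div_eq_mul_inv, ← zpow_sub₀ (by norm_num), sub_sub_cancel]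
  rw [norm_nodalWeight_circleNodes, circleResidue, card_nodeIndices,
    prod_two_mul_sin_half_sub (hx.strictMonoOn hα) (fun _ hk => hx.mem_Ioo hα hk) hj, mul_inv,
    abs_mul, abs_neg_one_pow, one_mul, abs_abs]
  calc _ ≤ 2 * ((-1) ^ j * cos ((2 * N + 1 : ℕ) * x j / 2)) * _ := by
        gcongr
        exact hx.cos_pi_mul_le (by linarith) hj
    _ = _ := by
        rw [← hsign]
        ring

lemma PerturbedNodes.sum_poissonKernel_le (hx : PerturbedNodes N α x) (hα : α < 1 / 2) {w : ℂ}
    (hw : ‖w‖ < 1) :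
    cos (π * α) * ∑ j ∈ nodeIndices N,
        ‖Lagrange.nodalWeight (nodeIndices N) (circleNodes x) j‖
          * poissonKernel 0 w (circleNodes x j)
      ≤ 2 / ‖(Lagrange.nodal (nodeIndices N) (circleNodes x)).eval w‖ := by
  set s := nodeIndices N
  have hnum : ‖w ^ #s + 1‖ ≤ 2 := by
    refine (norm_add_le _ _).trans ?_
    rw [norm_pow, norm_one]
    linarith [pow_le_one₀ (norm_nonneg w) hw.le (n := #s)]
  have hdouble := calc
    2 * (cos (π * α) * ∑ j ∈ s, ‖Lagrange.nodalWeight s (circleNodes x) j‖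
          * poissonKernel 0 w (circleNodes x j))
      = ∑ j ∈ s, 2 * cos (π * α) * ‖Lagrange.nodalWeight s (circleNodes x) j‖
          * poissonKernel 0 w (circleNodes x j) := by
        simp only [mul_sum, mul_assoc]
    _ ≤ ∑ j ∈ s, (-1) ^ N * circleResidue s x j * poissonKernel 0 w (circleNodes x j) := by
        refine sum_le_sum fun j hj => mul_le_mul_of_nonneg_right
          (hx.mul_norm_nodalWeight_le hα hj) (poissonKernel_nonneg ?_)
        rw [norm_circleNodes]
        exact hw.le
    _ = (-1) ^ N * ∑ j ∈ s, circleResidue s x j * poissonKernel 0 w (circleNodes x j) := by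
        simp only [mul_sum, mul_assoc]
    _ ≤ |∑ j ∈ s, circleResidue s x j * poissonKernel 0 w (circleNodes x j)| := by
        refine (le_abs_self _).trans_eq ?_
        rw [abs_mul, abs_neg_one_pow, one_mul]
    _ ≤ 2 * ‖(w ^ #s + 1) / (Lagrange.nodal s (circleNodes x)).eval w‖ :=
        abs_sum_circleResidue_mul_poissonKernel_le (hx.injOn_circleNodes hα)
          (nodeIndices_nonempty N) hw
    _ ≤ 2 * (2 / ‖(Lagrange.nodal s (circleNodes x)).eval w‖) := by
        rw [norm_div]
        gcongr
  linarith

end PerturbedNodes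

section RadialGrowth

lemma two_mul_abs_sin_half_sub_le (θ δ : ℝ) :
    2 * |sin ((θ - δ) / 2)| ≤ 2 * |sin (θ / 2)| + |δ| * |cos (θ / 2)| := by
  have hδ : |sin (δ / 2)| ≤ |δ| / 2 := by
    simpa only [abs_div, abs_two] using abs_sin_le_abs (x := δ / 2)
  rw [sub_div, sin_sub]
  calc 2 * |sin (θ / 2) * cos (δ / 2) - cos (θ / 2) * sin (δ / 2)|
      ≤ 2 * (|sin (θ / 2)| * |cos (δ / 2)| + |cos (θ / 2)| * |sin (δ / 2)|) := by
        rw [← abs_mul, ← abs_mul]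
        gcongr
        exact abs_sub _ _
    _ ≤ 2 * (|sin (θ / 2)| * 1 + |cos (θ / 2)| * (|δ| / 2)) := by
        gcongr
        exact abs_cos_le_one _
    _ = 2 * |sin (θ / 2)| + |δ| * |cos (θ / 2)| := by ring

lemma abs_cos_half_mul_le {θ : ℝ} (hθ : |θ| ≤ π) : |cos (θ / 2)| * |θ| ≤ 2 * |sin (θ / 2)| := by
  have hcos : |cos (θ / 2)| = cos (|θ / 2|) := by
    rw [cos_abs]
    exact abs_of_nonneg (cos_nonneg_of_mem_Icc (by constructor <;> linarith [abs_le.1 hθ]))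
  have hhalf : |θ / 2| = |θ| / 2 := by rw [abs_div, abs_two]
  rw [abs_sin_eq_sin_abs_of_abs_le_pi (by linarith [pi_pos]), hcos, hhalf]
  rcases hθ.eq_or_lt with heq | hlt
  · rw [heq, cos_pi_div_two, zero_mul, sin_pi_div_two]
    norm_num
  · have htan := le_tan (x := |θ| / 2) (by positivity) (by linarith)
    have hcos_pos : 0 < cos (|θ| / 2) :=
      cos_pos_of_mem_Ioo ⟨by linarith [abs_nonneg θ, pi_pos], by linarith⟩
    rw [tan_eq_sin_div_cos, le_div_iff₀ hcos_pos] at htan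
    linarith

/-- A bound for the logarithmic derivative, with respect to the angle of the node, of the distance
from `r * e ^ (i * y)` to a node whose angle differs from `y` by `θ`. -/
noncomputable def angularSensitivity (r θ : ℝ) : ℝ :=
  √r * |cos (θ / 2)| / ‖r • (Circle.exp θ : ℂ) - 1‖

variable {r r₀ θ : ℝ}

lemma angularSensitivity_nonneg (r θ : ℝ) : 0 ≤ angularSensitivity r θ := by
  unfold angularSensitivity
  positivity

lemma angularSensitivity_periodic (r : ℝ) : Function.Periodic (angularSensitivity r) (2 * π) :=
  fun θ => by
    rw [angularSensitivity, angularSensitivity, Circle.exp_add_two_pi, add_div,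
      mul_div_cancel_left₀ _ two_ne_zero, cos_add_pi, abs_neg]

lemma angularSensitivity_mul_abs_le_one (hr : 0 ≤ r) (hθ : |θ| ≤ π) :
    angularSensitivity r θ * |θ| ≤ 1 := by
  have hchord : ‖(Circle.exp θ : ℂ) - 1‖ = 2 * |sin (θ / 2)| := by
    simpa using norm_coe_circle_exp_sub θ 0
  rw [angularSensitivity, div_mul_eq_mul_div, mul_assoc]
  refine div_le_one_of_le₀ ?_ (norm_nonneg _)
  calc √r * (|cos (θ / 2)| * |θ|) ≤ √r * ‖(Circle.exp θ : ℂ) - 1‖ := by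
        rw [hchord]
        exact mul_le_mul_of_nonneg_left (abs_cos_half_mul_le hθ) (sqrt_nonneg r)
    _ ≤ ‖r • (Circle.exp θ : ℂ) - 1‖ := sqrt_mul_norm_sub_le (Circle.norm_coe _) norm_one hr

lemma angularSensitivity_le_inv_one_sub (hr : 0 ≤ r) (hr₁ : r < 1) (θ : ℝ) :
    angularSensitivity r θ ≤ 1 / (1 - r) :=
  div_le_div₀ zero_le_one
    (mul_le_one₀ (sqrt_le_one.2 hr₁.le) (abs_nonneg _) (abs_cos_le_one _)) (sub_pos.2 hr₁)
    (one_sub_le_norm_smul_sub (Circle.norm_coe _) norm_one hr)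

lemma norm_smul_circle_exp_sub_le (hr : 0 ≤ r) (hr₁ : r < 1) (y a b : ℝ) :
    ‖r • (Circle.exp y : ℂ) - Circle.exp b‖
      ≤ exp (|b - a| * angularSensitivity r (y - a)) * ‖r • (Circle.exp y : ℂ) - Circle.exp a‖ := by
  have hchord : ‖(Circle.exp y : ℂ) - Circle.exp b‖
      ≤ ‖(Circle.exp y : ℂ) - Circle.exp a‖ + |b - a| * |cos ((y - a) / 2)| := by
    rw [norm_coe_circle_exp_sub, norm_coe_circle_exp_sub, ← sub_sub_sub_cancel_right y b a]
    exact two_mul_abs_sin_half_sub_le _ _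
  have hrotate : ‖r • (Circle.exp (y - a) : ℂ) - 1‖ = ‖r • (Circle.exp y : ℂ) - Circle.exp a‖ := by
    have hne := Circle.coe_ne_zero (Circle.exp a)
    rw [← mul_one ‖r • (Circle.exp (y - a) : ℂ) - 1‖, ← Circle.norm_coe (Circle.exp a), ← norm_mul,
      sub_mul, smul_mul_assoc, Circle.exp_sub, Circle.coe_div, div_mul_cancel₀ _ hne, one_mul]
  have hpos := norm_smul_sub_pos (Circle.norm_coe (Circle.exp y)) (Circle.norm_coe (Circle.exp a))
    hr hr₁
  calc ‖r • (Circle.exp y : ℂ) - Circle.exp b‖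
      ≤ ‖r • (Circle.exp y : ℂ) - Circle.exp a‖ + √r * (|b - a| * |cos ((y - a) / 2)|) :=
        norm_smul_sub_le_add_sqrt_mul (Circle.norm_coe _) (Circle.norm_coe _) (Circle.norm_coe _)
          hr (by positivity) hchord
    _ = (|b - a| * angularSensitivity r (y - a) + 1)
          * ‖r • (Circle.exp y : ℂ) - Circle.exp a‖ := by
        rw [angularSensitivity, hrotate]
        field_simp
        ring
    _ ≤ _ := by
        gcongr
        exact add_one_le_exp _

lemma norm_smul_circle_exp_sub_mul_le (hr : 0 ≤ r) (hrr₀ : r ≤ r₀) (hr₀ : r₀ < 1) (y a b : ℝ) :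
    ‖r₀ • (Circle.exp y : ℂ) - Circle.exp b‖ * ‖r • (Circle.exp y : ℂ) - Circle.exp a‖
      ≤ exp (|b - a| * angularSensitivity r₀ (y - a)) *
        (‖r₀ • (Circle.exp y : ℂ) - Circle.exp a‖ * ‖r • (Circle.exp y : ℂ) - Circle.exp b‖) := by
  rcases le_total ‖(Circle.exp y : ℂ) - Circle.exp a‖ ‖(Circle.exp y : ℂ) - Circle.exp b‖
    with hab | hba
  · rw [← mul_assoc]
    gcongr
    · exact norm_smul_circle_exp_sub_le (hr.trans hrr₀) hr₀ y a b
    · exact norm_smul_sub_le_norm_smul_sub (Circle.norm_coe _) (Circle.norm_coe _)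
        (Circle.norm_coe _) hr hab
  · refine (norm_smul_sub_mul_le_of_norm_sub_le (Circle.norm_coe _) (Circle.norm_coe _)
      (Circle.norm_coe _) hr hrr₀ hr₀.le hba).trans (le_mul_of_one_le_left (by positivity) ?_)
    exact one_le_exp (mul_nonneg (abs_nonneg _) (angularSensitivity_nonneg _ _))

lemma norm_eval_nodal_circleNodes_mul_le {ι : Type*} (s : Finset ι) (a b : ι → ℝ) (hr : 0 ≤ r)
    (hrr₀ : r ≤ r₀) (hr₀ : r₀ < 1) (y : ℝ) :
    ‖(Lagrange.nodal s (circleNodes b)).eval (r₀ • (Circle.exp y : ℂ))‖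
        * ‖(Lagrange.nodal s (circleNodes a)).eval (r • (Circle.exp y : ℂ))‖
      ≤ exp (∑ k ∈ s, |b k - a k| * angularSensitivity r₀ (y - a k)) *
        (‖(Lagrange.nodal s (circleNodes a)).eval (r₀ • (Circle.exp y : ℂ))‖
          * ‖(Lagrange.nodal s (circleNodes b)).eval (r • (Circle.exp y : ℂ))‖) := by
  simp only [norm_eval_nodal, exp_sum, ← prod_mul_distrib]
  exact prod_le_prod (fun _ _ => by positivity)
    fun k _ => norm_smul_circle_exp_sub_mul_le hr hrr₀ hr₀ y (a k) (b k)

end RadialGrowth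

section MeshSum

variable {g : ℝ → ℝ} {h r : ℝ} {N : ℕ}

lemma sum_nodeIndices_eq_add_sum_range {M : Type*} [AddCommGroup M] (N : ℕ) (ψ : ℤ → M) :
    ∑ k ∈ nodeIndices N, ψ k = ψ 0 + ∑ i ∈ range N, (ψ (i + 1) + ψ (-(i + 1))) := by
  induction N with
  | zero => simp [nodeIndices]
  | succ N ih =>
    rw [nodeIndices, Nat.cast_succ, Finset.sum_Icc_succ_eq_add_endpoints, ih, sum_range_succ]
    abel

lemma periodic_sum_comp_sub_mul (hg : Function.Periodic g ((2 * N + 1) * h)) :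
    Function.Periodic (fun y => ∑ k ∈ nodeIndices N, g (y - k * h)) h := by
  intro y
  set F : ℤ → ℝ := fun k => g (y + h - k * h) with hF
  have hstep : ∀ k : ℤ, g (y - k * h) = F (k + 1) := fun k => by
    rw [hF]
    push_cast
    ring_nf
  have hends : F (-N) = F (N + 1) :=
    calc F (-N) = g (y + h - ((N + 1 : ℤ) : ℝ) * h + (2 * N + 1) * h) :=
          congrArg g (by push_cast; ring)
      _ = F (N + 1) := hg _
  have htelescope : ∑ k ∈ nodeIndices N, (F k - F (k + 1)) = F (-N) - F (N + 1) := by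
    rw [nodeIndices, Finset.sum_Icc_eq_sum_Ico_add _ (by omega), Finset.sum_Ico_int_sub,
      sub_add_sub_cancel]
  simp only [hstep]
  rw [← sub_eq_zero, ← sum_sub_distrib, htelescope, hends, sub_self]

lemma sum_one_div_add_half_le (N : ℕ) :
    ∑ i ∈ range N, 1 / ((i : ℝ) + 1 / 2) ≤ 3 + log N := by
  cases N with
  | zero => simp
  | succ n =>
    have hharmonic : ∑ i ∈ range n, 1 / (((i + 1 : ℕ) : ℝ) + 1 / 2) ≤ harmonic n := by
      rw [harmonic]
      push_cast
      refine sum_le_sum fun i _ => ?_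
      rw [← one_div]
      exact one_div_le_one_div_of_le (by positivity) (by linarith)
    have hlog : log n ≤ log (n + 1 : ℕ) := by
      rcases n.eq_zero_or_pos with rfl | hn
      · simp
      · exact log_le_log (by positivity) (by push_cast; linarith)
    rw [sum_range_succ', Nat.cast_zero, zero_add, one_div_one_div]
    linarith [harmonic_le_one_add_log n]

lemma mul_angularSensitivity_le (hr : 0 ≤ r) (hh : 0 < h) (hπ : (2 * N + 1) * h = 2 * π) {y : ℝ}
    (hy : |y| ≤ h / 2) {i : ℕ} (hi : i < N) {l : ℤ} (hl : |(l : ℝ)| = i + 1) :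
    h * angularSensitivity r (y - l * h) ≤ 1 / ((i : ℝ) + 1 / 2) := by
  have hiN : (i : ℝ) + 1 ≤ N := by exact_mod_cast hi
  have hlh : |(l : ℝ) * h| = (i + 1) * h := by rw [abs_mul, hl, abs_of_pos hh]
  have hlower : (i + 1 / 2) * h ≤ |y - l * h| := by
    have := abs_sub_abs_le_abs_sub ((l : ℝ) * h) y
    rw [abs_sub_comm ((l : ℝ) * h)] at this
    linarith
  have hupper : |y - l * h| ≤ π := by
    have := abs_sub y ((l : ℝ) * h)
    nlinarith
  rw [le_div_iff₀ (by positivity)]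
  calc h * angularSensitivity r (y - l * h) * (i + 1 / 2)
      = angularSensitivity r (y - l * h) * ((i + 1 / 2) * h) := by ring
    _ ≤ angularSensitivity r (y - l * h) * |y - l * h| :=
        mul_le_mul_of_nonneg_left hlower (angularSensitivity_nonneg _ _)
    _ ≤ 1 := angularSensitivity_mul_abs_le_one hr hupper

lemma sum_mul_angularSensitivity_le (hr : 0 ≤ r) (hr₁ : r < 1) (hπ : (2 * N + 1) * h = 2 * π)
    (y : ℝ) :
    ∑ k ∈ nodeIndices N, h * angularSensitivity r (y - k * h)
      ≤ h / (1 - r) + 2 * (3 + log N) := by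
  have hh : 0 < h := pos_of_mul_pos_right (hπ ▸ two_pi_pos) (by positivity)
  have hperiodic := periodic_sum_comp_sub_mul (N := N) (h := h)
    (g := fun θ => h * angularSensitivity r θ)
    (hπ ▸ fun θ => congrArg (h * ·) (angularSensitivity_periodic r θ))
  obtain ⟨t, ht, hyt⟩ := hperiodic.exists_mem_Ico hh y (-(h / 2))
  have ht' : |t| ≤ h / 2 := abs_le.2 ⟨ht.1, by linarith [ht.2]⟩
  have hsum := sum_one_div_add_half_le N
  calc ∑ k ∈ nodeIndices N, h * angularSensitivity r (y - k * h)
      = ∑ k ∈ nodeIndices N, h * angularSensitivity r (t - k * h) := hyt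
    _ ≤ h * (1 / (1 - r))
          + ∑ i ∈ range N, (1 / ((i : ℝ) + 1 / 2) + 1 / ((i : ℝ) + 1 / 2)) := by
        rw [sum_nodeIndices_eq_add_sum_range]
        gcongr with i hi
        · exact angularSensitivity_le_inv_one_sub hr hr₁ _
        all_goals
          refine mul_angularSensitivity_le hr hh hπ ht' (mem_range.1 hi) ?_
          push_cast
        · exact abs_of_nonneg (by positivity)
        · rw [abs_neg]
          exact abs_of_nonneg (by positivity)
    _ ≤ h / (1 - r) + 2 * (3 + log N) := by
        rw [mul_one_div, sum_add_distrib, ← two_mul]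
        gcongr

end MeshSum

section NodePolynomial

variable {N : ℕ} {α r : ℝ} {x : ℤ → ℝ}

lemma nodal_circleNodes_uniform (N : ℕ) :
    Lagrange.nodal (nodeIndices N) (circleNodes fun k : ℤ => k * (2 * π / (2 * N + 1)))
      = Polynomial.X ^ (2 * N + 1) - Polynomial.C 1 := by
  have huniform : PerturbedNodes N 0 fun k => k * (2 * π / (2 * N + 1)) := fun j _ => by simp
  refine Polynomial.eq_of_degree_le_of_eval_index_eq _
    (huniform.injOn_circleNodes (by norm_num)) Lagrange.degree_nodal.le ?_ ?_ fun k hk => ?_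
  · rw [Lagrange.degree_nodal, card_nodeIndices, Polynomial.degree_X_pow_sub_C (by omega)]
  · rw [Lagrange.nodal_monic, (Polynomial.monic_X_pow_sub_C _ (by omega)).leadingCoeff]
  · have hroot : (2 * N + 1 : ℕ) * ((k : ℝ) * (2 * π / (2 * N + 1))) = k * (2 * π) := by
      push_cast
      field_simp
    rw [Lagrange.eval_nodal_at_node hk, Polynomial.eval_sub, Polynomial.eval_X_pow,
      Polynomial.eval_C, circleNodes, ← Circle.coe_pow, ← Circle.exp_nsmul, nsmul_eq_mul, hroot,
      Circle.exp_int_mul_two_pi, Circle.coe_one, sub_self]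

lemma dyadicRadius_zero_pow_le {n : ℕ} (hn : 0 < n) : dyadicRadius n 0 ^ n ≤ 2 / 3 := by
  have hexp : dyadicRadius n 0 ^ n ≤ exp (-(1 / 2)) := by
    have hone : (1 : ℝ) ≤ n := by exact_mod_cast hn
    rw [dyadicRadius_zero, ← div_div]
    exact one_sub_div_pow_le_exp_neg (by linarith)
  calc dyadicRadius n 0 ^ n ≤ exp (-(1 / 2)) := hexp
    _ = (exp (1 / 2))⁻¹ := exp_neg _
    _ ≤ (3 / 2)⁻¹ := inv_anti₀ (by norm_num) (by linarith [add_one_le_exp (1 / 2 : ℝ)])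
    _ = 2 / 3 := by norm_num

lemma abs_norm_eval_nodal_circleNodes_uniform_sub_one_le (N : ℕ) (hr : 0 ≤ r) (y : ℝ) :
    |‖(Lagrange.nodal (nodeIndices N) (circleNodes fun k : ℤ => k * (2 * π / (2 * N + 1)))).eval
      (r • (Circle.exp y : ℂ))‖ - 1| ≤ r ^ (2 * N + 1) := by
  rw [nodal_circleNodes_uniform, Polynomial.eval_sub, Polynomial.eval_X_pow, Polynomial.eval_C]
  have hnorm : ‖(r • (Circle.exp y : ℂ)) ^ (2 * N + 1)‖ = r ^ (2 * N + 1) := by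
    rw [norm_pow, norm_smul, Circle.norm_coe, mul_one, norm_of_nonneg hr]
  have hle := abs_norm_sub_norm_le ((r • (Circle.exp y : ℂ)) ^ (2 * N + 1) - 1) (-1)
  rwa [sub_neg_eq_add, sub_add_cancel, norm_neg, norm_one, hnorm] at hle

lemma PerturbedNodes.sum_abs_mul_angularSensitivity_le (hx : PerturbedNodes N α x) (hα : 0 ≤ α)
    (y : ℝ) :
    ∑ k ∈ nodeIndices N, |x k - k * (2 * π / (2 * N + 1))|
        * angularSensitivity (dyadicRadius (2 * N + 1) 0) (y - k * (2 * π / (2 * N + 1)))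
      ≤ α * (4 * π + 6) + 2 * α * log N := by
  set h : ℝ := 2 * π / (2 * N + 1)
  set r₀ := dyadicRadius (2 * N + 1) 0
  have hr₀ : 0 ≤ r₀ := one_half_pos.le.trans (half_le_dyadicRadius (by omega) (Nat.zero_le _))
  have hgap : h / (1 - r₀) = 4 * π := by
    rw [show r₀ = _ from dyadicRadius_zero _]
    push_cast
    simp only [h]
    field_simp
    ring
  calc ∑ k ∈ nodeIndices N, |x k - k * h| * angularSensitivity r₀ (y - k * h)
      ≤ ∑ k ∈ nodeIndices N, α * h * angularSensitivity r₀ (y - k * h) :=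
        sum_le_sum fun k hk => mul_le_mul_of_nonneg_right (hx k hk) (angularSensitivity_nonneg _ _)
    _ = α * ∑ k ∈ nodeIndices N, h * angularSensitivity r₀ (y - k * h) := by
        simp only [mul_sum, mul_assoc]
    _ ≤ α * (h / (1 - r₀) + 2 * (3 + log N)) := by
        gcongr
        exact sum_mul_angularSensitivity_le hr₀
          (dyadicRadius_lt_one (by omega) 0) (mul_div_cancel₀ _ (by positivity)) y
    _ = α * (4 * π + 6) + 2 * α * log N := by
        rw [hgap]
        ring

lemma PerturbedNodes.norm_eval_nodal_le (hx : PerturbedNodes N α x) (hN : 0 < N) (hα : 0 ≤ α)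
    (hr : 0 ≤ r) (hrr₀ : r ≤ dyadicRadius (2 * N + 1) 0) (y : ℝ) :
    ‖(Lagrange.nodal (nodeIndices N) (circleNodes x)).eval
        (dyadicRadius (2 * N + 1) 0 • (Circle.exp y : ℂ))‖
      ≤ 6 * exp (α * (4 * π + 6)) * (N : ℝ) ^ (2 * α)
        * ‖(Lagrange.nodal (nodeIndices N) (circleNodes x)).eval (r • (Circle.exp y : ℂ))‖ := by
  set r₀ := dyadicRadius (2 * N + 1) 0
  set u : ℤ → ℝ := fun k => k * (2 * π / (2 * N + 1))
  set Pu := Lagrange.nodal (nodeIndices N) (circleNodes u)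
  set Px := Lagrange.nodal (nodeIndices N) (circleNodes x)
  have hpow : r₀ ^ (2 * N + 1) ≤ 2 / 3 := dyadicRadius_zero_pow_le (by omega)
  have hupper : ‖Pu.eval (r₀ • (Circle.exp y : ℂ))‖ ≤ 2 := by
    linarith [(abs_le.1 (abs_norm_eval_nodal_circleNodes_uniform_sub_one_le N (hr.trans hrr₀) y)).2]
  have hlower : 1 / 3 ≤ ‖Pu.eval (r • (Circle.exp y : ℂ))‖ := by
    linarith [(abs_le.1 (abs_norm_eval_nodal_circleNodes_uniform_sub_one_le N hr y)).1,
      pow_le_pow_left₀ hr hrr₀ (2 * N + 1)]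
  calc ‖Px.eval (r₀ • (Circle.exp y : ℂ))‖
      ≤ 3 * (‖Px.eval (r₀ • (Circle.exp y : ℂ))‖ * ‖Pu.eval (r • (Circle.exp y : ℂ))‖) := by
        nlinarith [norm_nonneg (Px.eval (r₀ • (Circle.exp y : ℂ)))]
    _ ≤ 3 * (exp (α * (4 * π + 6) + 2 * α * log N) *
          (2 * ‖Px.eval (r • (Circle.exp y : ℂ))‖)) := by
        refine mul_le_mul_of_nonneg_left ((norm_eval_nodal_circleNodes_mul_le _ u x hr hrr₀
          (dyadicRadius_lt_one (by omega) 0) y).trans ?_) (by norm_num)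
        gcongr
        exact hx.sum_abs_mul_angularSensitivity_le hα y
    _ = _ := by
        rw [rpow_def_of_pos (by exact_mod_cast hN), exp_add, mul_comm (log _)]
        ring

end NodePolynomial

section LebesgueFunctionBound

variable {N : ℕ} {α r : ℝ} {x : ℤ → ℝ}

lemma PerturbedNodes.norm_eval_nodal_mul_sum_poissonKernel_le (hx : PerturbedNodes N α x)
    (hN : 0 < N) (hα₀ : 0 ≤ α) (hα : α < 1 / 2) (hr : 0 ≤ r)
    (hrr₀ : r ≤ dyadicRadius (2 * N + 1) 0) (y : ℝ) :
    ‖(Lagrange.nodal (nodeIndices N) (circleNodes x)).eval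
        (dyadicRadius (2 * N + 1) 0 • (Circle.exp y : ℂ))‖ *
      ∑ j ∈ nodeIndices N, ‖Lagrange.nodalWeight (nodeIndices N) (circleNodes x) j‖
        * poissonKernel 0 (r • (Circle.exp y : ℂ)) (circleNodes x j)
      ≤ 12 * exp (α * (4 * π + 6)) / cos (π * α) * (N : ℝ) ^ (2 * α) := by
  set P := Lagrange.nodal (nodeIndices N) (circleNodes x)
  set w : ℂ := r • (Circle.exp y : ℂ)
  set S : ℝ := ∑ j ∈ nodeIndices N, ‖Lagrange.nodalWeight (nodeIndices N) (circleNodes x) j‖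
    * poissonKernel 0 w (circleNodes x j)
  set P₀ : ℝ := ‖P.eval (dyadicRadius (2 * N + 1) 0 • (Circle.exp y : ℂ))‖
  have hcos : 0 < cos (π * α) :=
    cos_pos_of_mem_Ioo ⟨by nlinarith [pi_pos], by nlinarith [pi_pos]⟩
  have hw : ‖w‖ < 1 := by
    rw [norm_smul, Circle.norm_coe, mul_one, norm_of_nonneg hr]
    exact hrr₀.trans_lt (dyadicRadius_lt_one (by omega) 0)
  have hratio : P₀ / ‖P.eval w‖ ≤ 6 * exp (α * (4 * π + 6)) * (N : ℝ) ^ (2 * α) :=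
    div_le_of_le_mul₀ (norm_nonneg _) (by positivity) (hx.norm_eval_nodal_le hN hα₀ hr hrr₀ y)
  calc P₀ * S = P₀ * (cos (π * α) * S) / cos (π * α) := by field_simp
    _ ≤ P₀ * (2 / ‖P.eval w‖) / cos (π * α) := by
        gcongr
        exact hx.sum_poissonKernel_le hα hw
    _ = 2 * (P₀ / ‖P.eval w‖) / cos (π * α) := by ring
    _ ≤ 2 * (6 * exp (α * (4 * π + 6)) * (N : ℝ) ^ (2 * α)) / cos (π * α) := by gcongr
    _ = _ := by ring

lemma PerturbedNodes.lebesgueFunction_le (hx : PerturbedNodes N α x) (hN : 0 < N) (hα₀ : 0 ≤ α)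
    (hα : α < 1 / 2) (y : ℝ) :
    lebesgueFunction (nodeIndices N) (circleNodes x) (Circle.exp y : ℂ)
      ≤ 768 * exp (α * (4 * π + 6)) / cos (π * α) * (N : ℝ) ^ (2 * α)
        * (Nat.log 2 (2 * N + 1) + 1) := by
  set K : ℝ := 12 * exp (α * (4 * π + 6)) / cos (π * α) * (N : ℝ) ^ (2 * α) with hK
  have hsum := lebesgueFunction_le_sum_poissonKernel (s := nodeIndices N)
    (fun j _ => norm_circleNodes x j) (Circle.norm_coe (Circle.exp y))
  rw [card_nodeIndices] at hsum
  have hscales : _ ≤ #(range (Nat.log 2 (2 * N + 1) + 1)) • K :=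
    sum_le_card_nsmul _ _ _ fun i hi =>
      hx.norm_eval_nodal_mul_sum_poissonKernel_le hN hα₀ hα
        (one_half_pos.le.trans (half_le_dyadicRadius (by omega) (mem_range_succ_iff.1 hi)))
        (dyadicRadius_le_zero (2 * N + 1) i) y
  refine (hsum.trans (mul_le_mul_of_nonneg_left hscales (by norm_num))).trans_eq ?_
  rw [card_range, nsmul_eq_mul, Nat.cast_add_one, hK]
  ring

lemma natLog_two_le_two_mul_log (n : ℕ) : (Nat.log 2 n : ℝ) ≤ 2 * log n := by
  have hlog_two : 1 / 2 ≤ log 2 := by linarith [log_two_gt_d9]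
  have hlogb := natLog_le_logb n 2
  rw [logb, le_div_iff₀ (by positivity)] at hlogb
  push_cast at hlogb
  nlinarith [(Nat.log 2 n).cast_nonneg (α := ℝ)]

lemma natLog_two_add_one_le {ε : ℝ} (hε : 0 < ε) (hN : 0 < N) :
    (Nat.log 2 (2 * N + 1) : ℝ) + 1 ≤ (1 + 2 * 3 ^ ε / ε) * (N : ℝ) ^ ε := by
  have hN₁ : (1 : ℝ) ≤ N := by exact_mod_cast hN
  calc (Nat.log 2 (2 * N + 1) : ℝ) + 1 ≤ 2 * log (2 * N + 1) + 1 := by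
        simpa using natLog_two_le_two_mul_log (2 * N + 1)
    _ ≤ 2 * ((2 * N + 1) ^ ε / ε) + 1 := by
        gcongr
        exact log_le_rpow_div (by positivity) hε
    _ ≤ 2 * ((3 * N) ^ ε / ε) + (N : ℝ) ^ ε := by
        gcongr
        · linarith
        · exact one_le_rpow hN₁ hε.le
    _ = (1 + 2 * 3 ^ ε / ε) * (N : ℝ) ^ ε := by
        rw [mul_rpow (by norm_num) N.cast_nonneg]
        ring

end LebesgueFunctionBound

section TrigonometricInterpolation

variable {N : ℕ} {α : ℝ} {x : ℤ → ℝ} {f p q qt : ℝ → ℂ} {M : ℝ}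

lemma IsTrigPoly.sub (hp : IsTrigPoly N p) (hq : IsTrigPoly N q) :
    IsTrigPoly N (fun t => p t - q t) := by
  obtain ⟨c, hc⟩ := hp
  obtain ⟨d, hd⟩ := hq
  exact ⟨fun k => c k - d k, fun t => by simp only [hc, hd, ← sum_sub_distrib, sub_mul]⟩

lemma IsTrigPoly.continuous (hq : IsTrigPoly N q) : Continuous q := by
  obtain ⟨c, hc⟩ := hq
  rw [funext hc]
  fun_prop

lemma IsTrigPoly.exists_polynomial (hq : IsTrigPoly N q) :
    ∃ p : Polynomial ℂ, p.degree < (2 * N + 1 : ℕ) ∧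
      ∀ t, p.eval (Circle.exp t : ℂ) = (Circle.exp t : ℂ) ^ N * q t := by
  obtain ⟨c, hc⟩ := hq
  refine ⟨∑ k ∈ nodeIndices N, Polynomial.C (c k) * Polynomial.X ^ (k + N).toNat,
    ?_, fun t => ?_⟩
  · refine (Polynomial.degree_sum_le _ _).trans_lt ((Finset.sup_lt_iff (WithBot.bot_lt_coe _)).2
      fun k hk => (Polynomial.degree_C_mul_X_pow_le _ _).trans_lt ?_)
    rw [mem_Icc] at hk
    exact_mod_cast (by omega : (k + N).toNat < 2 * N + 1)
  · rw [Polynomial.eval_finsetSum, hc, mul_sum]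
    refine sum_congr rfl fun k hk => ?_
    have hexponent : (((k + N).toNat : ℕ) : ℂ) = k + N := by
      exact_mod_cast Int.toNat_of_nonneg (by linarith [(mem_Icc.1 hk).1] : 0 ≤ k + N)
    rw [Polynomial.eval_C_mul, Polynomial.eval_X_pow, Circle.coe_exp, ← Complex.exp_nat_mul,
      ← Complex.exp_nat_mul, hexponent, mul_left_comm (Complex.exp _), ← Complex.exp_add]
    ring_nf

lemma IsTrigPoly.norm_le_mul_lebesgueFunction (hq : IsTrigPoly N q)
    (hx : Set.InjOn (circleNodes x) (nodeIndices N)) (hM : ∀ j ∈ nodeIndices N, ‖q (x j)‖ ≤ M)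
    (y : ℝ) : ‖q y‖ ≤ M * lebesgueFunction (nodeIndices N) (circleNodes x) (Circle.exp y : ℂ) := by
  obtain ⟨p, hdegree, heval⟩ := hq.exists_polynomial
  have hnorm : ∀ t, ‖p.eval (Circle.exp t : ℂ)‖ = ‖q t‖ := fun t => by
    rw [heval, norm_mul, norm_pow, Circle.norm_coe, one_pow, one_mul]
  rw [← card_nodeIndices] at hdegree
  rw [← hnorm]
  exact norm_eval_le_mul_lebesgueFunction hx hdegree
    (fun j hj => (hnorm (x j)).trans_le (hM j hj)) _

lemma PerturbedNodes.norm_sub_interpolant_le (hx : PerturbedNodes N α x) (hα : α < 1 / 2)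
    (hqt : IsTrigPoly N qt) (hq : IsTrigPoly N q)
    (hinterp : ∀ j ∈ nodeIndices N, qt (x j) = f (x j))
    (hM : ∀ t ∈ Set.Ico (-π) π, ‖f t - q t‖ ≤ M) {y : ℝ} (hy : y ∈ Set.Ico (-π) π) :
    ‖f y - qt y‖
      ≤ (1 + lebesgueFunction (nodeIndices N) (circleNodes x) (Circle.exp y : ℂ)) * M := by
  have hnodes : ∀ j ∈ nodeIndices N, ‖qt (x j) - q (x j)‖ ≤ M := fun j hj => by
    rw [hinterp j hj]
    exact hM _ (Set.Ioo_subset_Ico_self (hx.mem_Ioo hα hj))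
  have hlebesgue := (hqt.sub hq).norm_le_mul_lebesgueFunction (hx.injOn_circleNodes hα) hnodes y
  calc ‖f y - qt y‖ = ‖(f y - q y) - (qt y - q y)‖ := by rw [sub_sub_sub_cancel_right]
    _ ≤ ‖f y - q y‖ + ‖qt y - q y‖ := norm_sub_le _ _
    _ ≤ M + M * lebesgueFunction (nodeIndices N) (circleNodes x) (Circle.exp y : ℂ) :=
        add_le_add (hM y hy) hlebesgue
    _ = _ := by ring

lemma bddAbove_range_norm_Ico {g : ℝ → ℂ} (hg : Continuous g) :
    BddAbove (Set.range fun t : Set.Ico (-π) π => ‖g t‖) := by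
  obtain ⟨B, hB⟩ := (isCompact_Icc (a := -π) (b := π)).exists_bound_of_continuousOn hg.continuousOn
  exact ⟨B, Set.forall_mem_range.2 fun t => hB t (Set.Ico_subset_Icc_self t.2)⟩

lemma norm_sub_le_supIco (hf : BddAbove (Set.range fun t : Set.Ico (-π) π => ‖f t‖))
    (hq : BddAbove (Set.range fun t : Set.Ico (-π) π => ‖q t‖)) {t : ℝ}
    (ht : t ∈ Set.Ico (-π) π) : ‖f t - q t‖ ≤ supIco fun t => f t - q t :=
  le_ciSup (f := fun u : Set.Ico (-π) π => ‖f u - q u‖)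
    ((hf.range_add hq).range_mono _ fun _ => norm_sub_le _ _) ⟨t, ht⟩

end TrigonometricInterpolation

theorem interpolation_improved_rate_general (α α₀ : ℝ) (hα0 : 0 ≤ α) (hα : α < 1 / 2)
    (hαα₀ : α < α₀) :
    ∃ C : ℝ, 0 < C ∧
      ∀ N : ℕ, 0 < N → ∀ x : ℤ → ℝ, PerturbedNodes N α x →
        ∀ f : ℝ → ℂ, BddAbove (Set.range fun t : Set.Ico (-π) π => ‖f t‖) →
          ∀ qt : ℝ → ℂ, IsTrigPoly N qt →
            (∀ j ∈ Finset.Icc (-(N : ℤ)) (N : ℤ), qt (x j) = f (x j)) →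
            ∀ q : ℝ → ℂ, IsTrigPoly N q → ∀ y ∈ Set.Ico (-π) π,
              ‖f y - qt y‖ ≤ C * (N : ℝ) ^ (2 * α₀) * supIco (fun t => f t - q t) := by
  have hcos : 0 < cos (π * α) :=
    cos_pos_of_mem_Ioo ⟨by nlinarith [pi_pos], by nlinarith [pi_pos]⟩
  have hε : 0 < 2 * (α₀ - α) := by linarith
  set A : ℝ := 768 * exp (α * (4 * π + 6)) / cos (π * α)
  set B : ℝ := 1 + 2 * 3 ^ (2 * (α₀ - α)) / (2 * (α₀ - α))
  refine ⟨1 + A * B, by positivity, fun N hN x hx f hf qt hqt hinterp q hq y hy => ?_⟩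
  have hN₁ : (1 : ℝ) ≤ N := by exact_mod_cast hN
  have hlebesgue :=
    calc lebesgueFunction (nodeIndices N) (circleNodes x) (Circle.exp y : ℂ)
        ≤ A * (N : ℝ) ^ (2 * α) * (Nat.log 2 (2 * N + 1) + 1) :=
          hx.lebesgueFunction_le hN hα0 hα y
      _ ≤ A * (N : ℝ) ^ (2 * α) * (B * (N : ℝ) ^ (2 * (α₀ - α))) := by
          gcongr
          exact natLog_two_add_one_le hε hN
      _ = A * B * (N : ℝ) ^ (2 * α₀) := by
          rw [mul_mul_mul_comm, ← rpow_add (by positivity)]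
          ring_nf
  refine (hx.norm_sub_interpolant_le hα hqt hq hinterp
    (fun t ht => norm_sub_le_supIco hf (bddAbove_range_norm_Ico hq.continuous) ht) hy).trans ?_
  gcongr
  · exact iSup_nonneg fun _ => norm_nonneg _
  · rw [add_mul, one_mul]
    exact add_le_add (one_le_rpow hN₁ (by linarith)) hlebesgue

/-- improved Lebesgue-type bound O(N^{2α₀}) for interpolation at α-perturbed
nodes, for any α < α₀ < 1/2 with α < 1/4. -/
theorem interpolation_improved_rate (α α₀ : ℝ) (hα0 : 0 ≤ α) (hα : α < 1/4)
    (hαα₀ : α < α₀) (hα₀ : α₀ < 1/2) :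
    ∃ C : ℝ, 0 < C ∧
      ∀ N : ℕ, 0 < N → ∀ x : ℤ → ℝ, PerturbedNodes N α x →
        ∀ f : ℝ → ℂ, Continuous f → Function.Periodic f (2*π) →
          ∀ qt : ℝ → ℂ, IsTrigPoly N qt →
            (∀ j ∈ Finset.Icc (-(N:ℤ)) (N:ℤ), qt (x j) = f (x j)) →
            ∀ q : ℝ → ℂ, IsTrigPoly N q → ∀ y ∈ Set.Ico (-π) π,
              ‖f y - qt y‖ ≤ C * (N:ℝ) ^ (2*α₀) * supIco (fun t => f t - q t) :=
  have ⟨C, hC, hbound⟩ := interpolation_improved_rate_general α α₀ hα0 (by linarith) hαα₀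
  ⟨C, hC, fun N hN x hx f hf _ => hbound N hN x hx f (bddAbove_range_norm_Ico hf)⟩
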